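/- arXiv:0910.4063 — 4 statements merged into one kernel-verified Lean document; each statement's English description precedes it below -/
import Mathlib

section
/- Assume that [ω]^{<ω} ⊆ X ⊆ P(ℕ), and let e ≥ 1 be a natural number. For each open ω-cover 𝒰 of X^e there are natural numbers m₀ < m₁ < m₂ < … and sets U₀,U₁,U₂,… ∈ 𝒰 such that for all n and all x₀,…,x_{e−1} ⊆ ℕ: if xᵢ ∩ (mₙ, mₙ₊₁) = ∅ for all i < e, then (x₀,…,x_{e−1}) ∈ Uₙ. -/
open Set Topology

open scoped Classical in
/-- The Cantor-space topology on `P(ℕ)`, induced by characteristic functions. -/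
noncomputable def cantorTopology : TopologicalSpace (Set ℕ) :=
  TopologicalSpace.induced (fun (s : Set ℕ) (n : ℕ) => decide (n ∈ s)) inferInstance

/-- `𝒰` is an ω-cover of `S`: no member of `𝒰` contains `S`, but every finite
subset of `S` is contained in some member of `𝒰`. -/
def OmegaCover {Y : Type*} (𝒰 : Set (Set Y)) (S : Set Y) : Prop :=
  (∀ U ∈ 𝒰, ¬ S ⊆ U) ∧ ∀ F : Set Y, F ⊆ S → F.Finite → ∃ U ∈ 𝒰, F ⊆ U

/-!
Given `m`, the tuples of subsets of `[0, m]` form a finite set, so some `U ∈ 𝒰` contains all of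
them. Being open, `U` contains with each of these tuples every tuple that agrees with it below a
large enough `m'`, and by finiteness one `m'` serves them all. If all coordinates of `x` miss
`(m, m')`, then `x` agrees below `m'` with its truncation to `[0, m]`, hence `x ∈ U`. Iterating
`m ↦ m'` gives the sequence.
-/

section

open Filter

attribute [local instance] cantorTopology

variable {ι : Type*}

/-- The basic neighbourhood of a family `f` of subsets of `ℕ`: the families whose coordinates have
the same elements below `N` as those of `f`. -/
def cantorCylinder (f : ι → Set ℕ) (N : ℕ) : Set (ι → Set ℕ) :=
  {x | ∀ k < N, ∀ i, k ∈ x i ↔ k ∈ f i}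

theorem antitone_cantorCylinder (f : ι → Set ℕ) : Antitone (cantorCylinder f) :=
  fun _ _ hMN _ hx k hk => hx k (hk.trans_le hMN)

open scoped Classical in
theorem isInducing_decide_mem : IsInducing fun (s : Set ℕ) (n : ℕ) => decide (n ∈ s) :=
  ⟨rfl⟩

theorem nhds_cantorTopology (s : Set ℕ) : 𝓝 s = ⨅ k, 𝓟 {t : Set ℕ | k ∈ t ↔ k ∈ s} := by
  simp only [isInducing_decide_mem.nhds_eq_comap, nhds_pi, Filter.pi, nhds_discrete, comap_iInf,
    comap_pure, comap_principal, preimage, mem_singleton_iff, Function.eval, mem_ofPred_eq,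
    decide_eq_decide]

theorem iInf_principal_cantorCylinder [Finite ι] (f : ι → Set ℕ) :
    ⨅ N, 𝓟 (cantorCylinder f N) = 𝓝 f := by
  have nhds_eq : 𝓝 f = ⨅ k, 𝓟 {x : ι → Set ℕ | ∀ i, k ∈ x i ↔ k ∈ f i} := by
    simp only [nhds_pi, Filter.pi, nhds_cantorTopology, comap_iInf, comap_principal,
      preimage_ofPred_eq]
    rw [iInf_comm]
    simp only [iInf_principal, ← ofPred_forall]
  rw [nhds_eq]
  apply le_antisymm
  · exact le_iInf fun k =>
      iInf_le_of_le (k + 1) <| principal_mono.2 fun x hx => hx k k.lt_succ_self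
  · refine le_iInf fun N => le_principal_iff.2 ?_
    exact (eventually_all_finite (finite_Iio N)).2 fun k _ =>
      mem_iInf_of_mem k (mem_principal_self _)

theorem hasAntitoneBasis_nhds_cantorCylinder [Finite ι] (f : ι → Set ℕ) :
    (𝓝 f).HasAntitoneBasis (cantorCylinder f) :=
  iInf_principal_cantorCylinder f ▸ .iInf_principal (antitone_cantorCylinder f)

theorem eventually_mem_of_disjoint_Ioo [Finite ι] {m : ℕ} {U : Set (ι → Set ℕ)}
    (hU : U ∈ 𝓝ˢ (univ.pi fun _ => 𝒫 (Iic m))) :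
    ∀ᶠ m' in atTop, ∀ x : ι → Set ℕ, (∀ i, Disjoint (x i) (Ioo m m')) → x ∈ U := by
  have finite_truncations : (univ.pi fun _ : ι => 𝒫 (Iic m)).Finite :=
    .pi fun _ => (finite_Iic m).finite_subsets
  have cylinders_subset :
      ∀ᶠ m' in atTop, ∀ f ∈ univ.pi fun _ : ι => 𝒫 (Iic m), cantorCylinder f m' ⊆ U :=
    (eventually_all_finite finite_truncations).2 fun f hf =>
      (hasAntitoneBasis_nhds_cantorCylinder f).eventually_subset
        (mem_nhdsSet_iff_forall.1 hU f hf)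
  filter_upwards [cylinders_subset] with m' hm' x hx
  refine hm' (fun i => x i ∩ Iic m) (fun i _ => inter_subset_right) fun k hk i => ?_
  have le_of_mem (hki : k ∈ x i) : k ≤ m :=
    not_lt.1 fun hmk => disjoint_left.1 (hx i) hki ⟨hmk, hk⟩
  exact ⟨fun hki => ⟨hki, le_of_mem hki⟩, And.left⟩

theorem stmt_5_general [Finite ι] {𝒰 : Set (Set (ι → Set ℕ))} (hopen : ∀ U ∈ 𝒰, IsOpen U)
    (hcover : ∀ F : Set (ι → Set ℕ), F.Finite → (∀ x ∈ F, ∀ i, (x i).Finite) →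
      ∃ U ∈ 𝒰, F ⊆ U) :
    ∃ (m : ℕ → ℕ) (U : ℕ → Set (ι → Set ℕ)), StrictMono m ∧ (∀ n, U n ∈ 𝒰) ∧
      ∀ n x, (∀ i, ∀ k, m n < k → k < m (n + 1) → k ∉ x i) → x ∈ U n := by
  have exists_next (m : ℕ) : ∃ m' > m, ∃ U ∈ 𝒰,
      ∀ x : ι → Set ℕ, (∀ i, Disjoint (x i) (Ioo m m')) → x ∈ U := by
    obtain ⟨U, hU, htruncations⟩ := hcover (univ.pi fun _ => 𝒫 (Iic m))
      (.pi fun _ => (finite_Iic m).finite_subsets)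
      fun x hx i => (finite_Iic m).subset (hx i trivial)
    obtain ⟨m', hm', hlt⟩ := ((eventually_mem_of_disjoint_Ioo
      ((hopen U hU).mem_nhdsSet.2 htruncations)).and (eventually_gt_atTop m)).exists
    exact ⟨m', hlt, U, hU, hm'⟩
  choose next lt_next V hV mem_V using exists_next
  refine ⟨fun n => next^[n] 0, fun n => V (next^[n] 0), strictMono_nat_of_lt_succ fun n => ?_,
    fun n => hV _, fun n x hx => mem_V _ x fun i => disjoint_left.2 fun k hk hkIoo => ?_⟩
  · simpa only [Function.iterate_succ_apply'] using lt_next _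
  · rw [← Function.iterate_succ_apply' next] at hkIoo
    exact hx i k hkIoo.1 hkIoo.2 hk

end

/-- For `[ω]^{<ω} ⊆ X ⊆ P(ℕ)`, `e ≥ 1`, and an open ω-cover `𝒰` of `X^e`,
there are `m₀ < m₁ < ⋯` and `U₀, U₁, ⋯ ∈ 𝒰` such that `(x₀,…,x_{e-1}) ∈ Uₙ`
whenever `xᵢ ∩ (mₙ, mₙ₊₁) = ∅` for all `i < e`. -/
theorem stmt_5 (X : Set (Set ℕ)) (hX : {s : Set ℕ | s.Finite} ⊆ X) (e : ℕ) (he : 1 ≤ e)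
    (𝒰 : Set (Set (Fin e → Set ℕ)))
    (hopen : ∀ U ∈ 𝒰,
      IsOpen[@Pi.topologicalSpace (Fin e) (fun _ => Set ℕ) (fun _ => cantorTopology)] U)
    (hcover : OmegaCover 𝒰 (Set.univ.pi fun _ : Fin e => X)) :
    ∃ (m : ℕ → ℕ) (U : ℕ → Set (Fin e → Set ℕ)), StrictMono m ∧ (∀ n, U n ∈ 𝒰) ∧
      ∀ (n : ℕ) (x : Fin e → Set ℕ),
        (∀ i : Fin e, ∀ k, m n < k → k < m (n + 1) → k ∉ x i) → x ∈ U n :=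
  stmt_5_general hopen fun F hF hfinite =>
    hcover.2 F (fun x hx i _ => hX (hfinite x hx i)) hF
end

section
/- For each infinite cardinal κ, the following are equivalent: (1) every ω-splitting family ℋ ⊆ [ω]^ω contains an ω-splitting subfamily of cardinality less than κ; (2) every ω-hitting family ℋ ⊆ [ω]^ω contains an ω-hitting subfamily of cardinality less than κ. -/
open Set Topology

/-- `H` splits `A`: both `A ∩ H` and `A \ H` are infinite. -/
def Splits (H A : Set ℕ) : Prop := (A ∩ H).Infinite ∧ (A \ H).Infinite

/-- `ℋ` is ω-splitting: for each countable `𝒜 ⊆ [ω]^ω` some `H ∈ ℋ` splits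
every member of `𝒜`. -/
def OmegaSplitting (ℋ : Set (Set ℕ)) : Prop :=
  ∀ 𝒜 : Set (Set ℕ), 𝒜.Countable → (∀ A ∈ 𝒜, A.Infinite) →
    ∃ H ∈ ℋ, ∀ A ∈ 𝒜, Splits H A

/-- `ℋ` is ω-hitting: for each countable `𝒜 ⊆ [ω]^ω` some `H ∈ ℋ` has infinite
intersection with every member of `𝒜`. -/
def OmegaHitting (ℋ : Set (Set ℕ)) : Prop :=
  ∀ 𝒜 : Set (Set ℕ), 𝒜.Countable → (∀ A ∈ 𝒜, A.Infinite) →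
    ∃ H ∈ ℋ, ∀ A ∈ 𝒜, (A ∩ H).Infinite

/-!
A set hits `A` if their intersection is infinite, so that `H` splits `A` exactly when both `H` and
its complement hit `A`.

From hitting to splitting: the infinite subsets of members of an ω-hitting `ℋ` form an ω-splitting
family, since countably many infinite traces on some `H ∈ ℋ` are split by one set. Enlarging every
member of an ω-splitting subfamily to a member of `ℋ` leaves it ω-hitting.

From splitting to hitting: replace `H` by its join with its complement, namely
`{2n | n ∈ H} ∪ {2n + 1 | n ∉ H}`. This set hits both `{2n | n ∈ A}` and `{2n + 1 | n ∈ A}` exactly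
when `H` splits `A`, so passing to joins translates ω-splitting into ω-hitting.
-/

theorem exists_injective_forall_mem_of_infinite {ι α : Type*} [Countable ι] {A : ι → Set α}
    (hA : ∀ i, (A i).Infinite) : ∃ x : ι → α, Function.Injective x ∧ ∀ i, x i ∈ A i := by
  classical
  obtain ⟨rank, hrank⟩ := exists_injective_nat ι
  -- Finite subsets of pairwise different positive cardinalities satisfy Hall's condition.
  choose t ht hcard using fun i => (hA i).exists_subset_card_eq (rank i + 1)
  have hall : ∀ s : Finset ι, s.card ≤ (s.biUnion t).card := by
    intro s
    obtain rfl | hs := s.eq_empty_or_nonempty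
    · simp
    obtain ⟨m, hm, hmax⟩ := s.exists_max_image rank hs
    calc
      s.card ≤ (Finset.range (rank m + 1)).card :=
        Finset.card_le_card_of_injOn rank
          (fun i hi => Finset.mem_coe.2 (Finset.mem_range_succ_iff.2 (hmax i hi))) hrank.injOn
      _ = (t m).card := by rw [Finset.card_range, hcard]
      _ ≤ (s.biUnion t).card := Finset.card_le_card (Finset.subset_biUnion_of_mem t hm)
  obtain ⟨x, hx, hmem⟩ := (Finset.all_card_le_biUnion_card_iff_exists_injective t).1 hall
  exact ⟨x, hx, fun i => ht i (hmem i)⟩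

theorem omegaSplitting_univ : OmegaSplitting univ := by
  intro 𝒜 hcount hinf
  have := hcount.to_subtype
  obtain ⟨x, hx, hmem⟩ := exists_injective_forall_mem_of_infinite
    (A := fun p : 𝒜 × ℕ × Bool => (p.1 : Set ℕ)) fun p => hinf _ p.1.2
  have hinj (A : 𝒜) (c : Bool) : Function.Injective fun n => x (A, n, c) :=
    fun m n hmn => congrArg (fun p => p.2.1) (hx hmn)
  refine ⟨x '' {p | p.2.2 = true}, mem_univ _, fun A hA => ⟨?_, ?_⟩⟩
  · exact infinite_of_injective_forall_mem (hinj ⟨A, hA⟩ true) fun n =>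
      ⟨hmem (⟨A, hA⟩, n, true), mem_image_of_mem x rfl⟩
  · exact infinite_of_injective_forall_mem (hinj ⟨A, hA⟩ false) fun n =>
      ⟨hmem (⟨A, hA⟩, n, false), by simp [hx.mem_set_image]⟩

theorem Splits.inter_right {S H A : Set ℕ} (h : Splits S (A ∩ H)) : Splits (S ∩ H) A :=
  ⟨h.1.mono fun _ hn => ⟨hn.1.1, hn.2, hn.1.2⟩, h.2.mono fun _ hn => ⟨hn.1.1, fun hS => hn.2 hS.1⟩⟩

namespace OmegaSplitting

variable {ℋ : Set (Set ℕ)}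

theorem omegaHitting (hℋ : OmegaSplitting ℋ) : OmegaHitting ℋ := fun 𝒜 hcount hinf =>
  (hℋ 𝒜 hcount hinf).imp fun _ hH => ⟨hH.1, fun A hA => (hH.2 A hA).1⟩

theorem sep_infinite (hℋ : OmegaSplitting ℋ) : OmegaSplitting {H ∈ ℋ | H.Infinite} := by
  intro 𝒜 hcount hinf
  obtain ⟨H, hH, hsplit⟩ := hℋ (insert univ 𝒜) (hcount.insert univ)
    (forall_mem_insert.2 ⟨infinite_univ, hinf⟩)
  obtain ⟨huniv, hsplit⟩ := forall_mem_insert.1 hsplit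
  exact ⟨H, ⟨hH, huniv.1.mono inter_subset_right⟩, hsplit⟩

end OmegaSplitting

namespace OmegaHitting

variable {ℋ 𝒮 : Set (Set ℕ)}

theorem omegaSplitting_lowerClosure (hℋ : OmegaHitting ℋ) :
    OmegaSplitting (lowerClosure ℋ : Set (Set ℕ)) := by
  intro 𝒜 hcount hinf
  obtain ⟨H, hH, hhit⟩ := hℋ 𝒜 hcount hinf
  obtain ⟨S, -, hS⟩ := omegaSplitting_univ ((· ∩ H) '' 𝒜) (hcount.image _)
    (forall_mem_image.2 hhit)
  exact ⟨S ∩ H, mem_lowerClosure.2 ⟨H, hH, inter_subset_right⟩,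
    fun A hA => (hS _ (mem_image_of_mem _ hA)).inter_right⟩

theorem exists_subset_of_subset_lowerClosure (h𝒮 : OmegaHitting 𝒮)
    (hsub : 𝒮 ⊆ lowerClosure ℋ) :
    ∃ ℋ' ⊆ ℋ, Cardinal.mk ℋ' ≤ Cardinal.mk 𝒮 ∧ OmegaHitting ℋ' := by
  choose enlarge hmem hle using fun S : 𝒮 => mem_lowerClosure.1 (hsub S.2)
  refine ⟨range enlarge, range_subset_iff.2 hmem, Cardinal.mk_range_le, ?_⟩
  intro 𝒜 hcount hinf
  obtain ⟨S, hS, hhit⟩ := h𝒮 𝒜 hcount hinf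
  exact ⟨enlarge ⟨S, hS⟩, mem_range_self _,
    fun A hA => (hhit A hA).mono (inter_subset_inter_right A (hle ⟨S, hS⟩))⟩

end OmegaHitting

/-- The join `A ⊕ B` of computability theory: the copy of the disjoint union of `A` and `B` in `ℕ`
with `A` on the even and `B` on the odd numbers. -/
def natJoin (A B : Set ℕ) : Set ℕ := (2 * ·) '' A ∪ (2 * · + 1) '' B

section natJoin

variable {A B C H : Set ℕ}

theorem injective_two_mul_add_one : Function.Injective fun n : ℕ => 2 * n + 1 :=
  (add_left_injective 1).comp (mul_right_injective₀ two_ne_zero)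

theorem natJoin_univ_univ : natJoin univ univ = univ := by
  rw [natJoin, image_univ, image_univ, range_two_mul, range_two_mul_add_one]
  exact Nat.isCompl_even_odd.sup_eq_top

theorem infinite_inter_natJoin_iff : (A ∩ natJoin B C).Infinite ↔
    ((2 * ·) ⁻¹' A ∩ B).Infinite ∨ ((2 * · + 1) ⁻¹' A ∩ C).Infinite := by
  rw [natJoin, inter_union_distrib_left, ← image_preimage_inter, ← image_preimage_inter,
    infinite_union, infinite_image_iff (mul_right_injective₀ two_ne_zero).injOn,
    infinite_image_iff injective_two_mul_add_one.injOn]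

theorem infinite_iff_preimage_even_or_odd :
    A.Infinite ↔ ((2 * ·) ⁻¹' A).Infinite ∨ ((2 * · + 1) ⁻¹' A).Infinite := by
  simpa only [natJoin_univ_univ, inter_univ] using
    infinite_inter_natJoin_iff (A := A) (B := univ) (C := univ)

theorem infinite_natJoin_compl (H : Set ℕ) : (natJoin H Hᶜ).Infinite := by
  have hor : H.Infinite ∨ Hᶜ.Infinite := by
    rw [← infinite_union, union_compl_self]
    exact infinite_univ
  simpa only [preimage_univ, univ_inter, hor, iff_true] using
    infinite_inter_natJoin_iff (A := univ) (B := H) (C := Hᶜ)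

theorem infinite_image_two_mul_inter_natJoin_iff :
    ((2 * ·) '' A ∩ natJoin B C).Infinite ↔ (A ∩ B).Infinite := by
  have hodd : (2 * · + 1) ⁻¹' ((2 * ·) '' A) = ∅ := by
    ext n
    simp only [mem_preimage, mem_image, mem_empty_iff_false, iff_false]
    grind
  simp [infinite_inter_natJoin_iff, preimage_image_eq _ (mul_right_injective₀ two_ne_zero), hodd]

theorem infinite_image_two_mul_add_one_inter_natJoin_iff :
    ((2 * · + 1) '' A ∩ natJoin B C).Infinite ↔ (A ∩ C).Infinite := by
  have heven : (2 * ·) ⁻¹' ((2 * · + 1) '' A) = ∅ := by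
    ext n
    simp only [mem_preimage, mem_image, mem_empty_iff_false, iff_false]
    grind
  simp [infinite_inter_natJoin_iff, preimage_image_eq _ injective_two_mul_add_one, heven]

theorem splits_iff_infinite_inter_natJoin_compl : Splits H A ↔
    ((2 * ·) '' A ∩ natJoin H Hᶜ).Infinite ∧ ((2 * · + 1) '' A ∩ natJoin H Hᶜ).Infinite := by
  rw [infinite_image_two_mul_inter_natJoin_iff, infinite_image_two_mul_add_one_inter_natJoin_iff,
    Splits, sdiff_eq]

end natJoin

section OmegaHittingNatJoin

variable {ℋ : Set (Set ℕ)}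

theorem OmegaSplitting.omegaHitting_image_natJoin_compl (hℋ : OmegaSplitting ℋ) :
    OmegaHitting ((fun H => natJoin H Hᶜ) '' ℋ) := by
  intro 𝒜 hcount hinf
  obtain ⟨H, hH, hsplit⟩ := hℋ
    {B ∈ preimage (2 * ·) '' 𝒜 ∪ preimage (2 * · + 1) '' 𝒜 | B.Infinite}
    (((hcount.image _).union (hcount.image _)).mono (sep_subset _ _)) fun _ hB => hB.2
  refine ⟨natJoin H Hᶜ, mem_image_of_mem _ hH, fun A hA => infinite_inter_natJoin_iff.2 ?_⟩
  exact (infinite_iff_preimage_even_or_odd.1 (hinf A hA)).imp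
    (fun heven => (hsplit _ ⟨.inl (mem_image_of_mem _ hA), heven⟩).1)
    (fun hodd => (hsplit _ ⟨.inr (mem_image_of_mem _ hA), hodd⟩).2)

theorem OmegaHitting.omegaSplitting_of_image_natJoin_compl
    (hℋ : OmegaHitting ((fun H => natJoin H Hᶜ) '' ℋ)) : OmegaSplitting ℋ := by
  intro 𝒜 hcount hinf
  obtain ⟨_, ⟨H, hH, rfl⟩, hhit⟩ := hℋ (image (2 * ·) '' 𝒜 ∪ image (2 * · + 1) '' 𝒜)
    ((hcount.image _).union (hcount.image _)) (by
      rintro _ (⟨A, hA, rfl⟩ | ⟨A, hA, rfl⟩)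
      · exact (hinf A hA).image (mul_right_injective₀ two_ne_zero).injOn
      · exact (hinf A hA).image injective_two_mul_add_one.injOn)
  exact ⟨H, hH, fun A hA => splits_iff_infinite_inter_natJoin_compl.2
    ⟨hhit _ (.inl (mem_image_of_mem _ hA)), hhit _ (.inr (mem_image_of_mem _ hA))⟩⟩

end OmegaHittingNatJoin

/-- For each infinite cardinal `κ`: every ω-splitting family contains an
ω-splitting subfamily of cardinality `< κ` if, and only if, every ω-hitting
family contains an ω-hitting subfamily of cardinality `< κ`. -/
theorem stmt_9 (κ : Cardinal) (hκ : Cardinal.aleph0 ≤ κ) :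
    (∀ ℋ : Set (Set ℕ), (∀ H ∈ ℋ, H.Infinite) → OmegaSplitting ℋ →
      ∃ ℋ' ⊆ ℋ, Cardinal.mk ℋ' < κ ∧ OmegaSplitting ℋ') ↔
    (∀ ℋ : Set (Set ℕ), (∀ H ∈ ℋ, H.Infinite) → OmegaHitting ℋ →
      ∃ ℋ' ⊆ ℋ, Cardinal.mk ℋ' < κ ∧ OmegaHitting ℋ') := by
  constructor
  · intro h ℋ _ hℋ
    obtain ⟨𝒮, h𝒮, hcard, hsplit⟩ :=
      h _ (fun _ hS => hS.2) hℋ.omegaSplitting_lowerClosure.sep_infinite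
    obtain ⟨ℋ', hsub, hle, hhit⟩ :=
      hsplit.omegaHitting.exists_subset_of_subset_lowerClosure fun _ hS => (h𝒮 hS).1
    exact ⟨ℋ', hsub, hle.trans_lt hcard, hhit⟩
  · intro h ℋ _ hℋ
    obtain ⟨𝒯, h𝒯, hcard, hhit⟩ := h ((fun H => natJoin H Hᶜ) '' ℋ)
      (forall_mem_image.2 fun H _ => infinite_natJoin_compl H) hℋ.omegaHitting_image_natJoin_compl
    obtain ⟨ℋ', hsub, hinj, rfl⟩ := SurjOn.exists_subset_injOn_image_eq h𝒯
    rw [Cardinal.mk_image_eq_of_injOn _ _ hinj] at hcard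
    exact ⟨ℋ', hsub, hcard, hhit.omegaSplitting_of_image_natJoin_compl⟩
end

section
/- If 𝒜 ⊆ [ω]^ω is an ω-hitting family, then ℬ = ⋃_{A ∈ 𝒜} [A]^ω, the family of all infinite subsets of members of 𝒜, is an ω-splitting family. -/
open Set Topology

/-! Some `H ∈ 𝒜` meets every member of the given countable family in an infinite set, its trace on
`H`. Some `S` splits all these countably many traces: choose pairwise distinct points, infinitely
many of each of two colours from every trace, and let `S` consist of the points of one colour. Then
`H ∩ S` splits every member of the family. -/

open scoped Cardinal

section Transversal

universe u

variable {ι α : Type u} (A : ι → Set α)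

theorem exists_injective_forall_mem_of_mk_le (hA : ∀ i, #ι ≤ #(A i)) :
    ∃ g : ι → α, Function.Injective g ∧ ∀ i, g i ∈ A i := by
  -- In a well-order of minimal type on `ι`, proper initial segments are smaller than every `A i`.
  obtain ⟨_, _, hord⟩ := Cardinal.exists_ord_eq_type_lt ι
  have exists_new (i : ι) (g : ∀ j, j < i → α) : ∃ x ∈ A i, ∀ j hj, g j hj ≠ x := by
    have hlt : #(range fun j : Iio i ↦ g j j.2) < #(A i) :=
      Cardinal.mk_range_le.trans_lt ((Cardinal.mk_Iio_lt i hord).trans_le (hA i))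
    obtain ⟨x, hxA, hx⟩ := Cardinal.sdiff_nonempty_of_mk_lt_mk hlt
    exact ⟨x, hxA, fun j hj hjx ↦ hx ⟨⟨j, hj⟩, hjx⟩⟩
  choose new new_mem ne_new using exists_new
  let g : ι → α := wellFounded_lt.fix new
  have g_eq (i : ι) : g i = new i fun j _ ↦ g j := wellFounded_lt.fix_eq new i
  refine ⟨g, Function.Injective.of_lt_imp_ne fun i j hij ↦ ?_, fun i ↦ ?_⟩
  · rw [g_eq j]
    exact ne_new j (fun k _ ↦ g k) i hij
  · rw [g_eq i]
    exact new_mem i fun j _ ↦ g j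

theorem exists_forall_infinite_inter_and_infinite_sdiff (hinf : ∀ i, (A i).Infinite)
    (hcard : ∀ i, #ι ≤ #(A i)) : ∃ S : Set α, ∀ i, (A i ∩ S).Infinite ∧ (A i \ S).Infinite := by
  have hcard' (k : ι × Bool × ℕ) : #(ι × Bool × ℕ) ≤ #(A k.1) := by
    have aleph0_le : ℵ₀ ≤ #(A k.1) := Cardinal.aleph0_le_mk_iff.2 (hinf k.1).to_subtype
    calc #(ι × Bool × ℕ) = #ι * ℵ₀ := by simp
      _ ≤ #(A k.1) * #(A k.1) := mul_le_mul' (hcard k.1) aleph0_le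
      _ = #(A k.1) := Cardinal.mul_eq_self aleph0_le
  obtain ⟨g, g_inj, g_mem⟩ :=
    exists_injective_forall_mem_of_mk_le (fun k : ι × Bool × ℕ ↦ A k.1) hcard'
  have g_row_inj (i : ι) (b : Bool) : Function.Injective fun n ↦ g (i, b, n) :=
    g_inj.comp ((Prod.mk_right_injective i).comp (Prod.mk_right_injective b))
  refine ⟨g '' {k | k.2.1 = true}, fun i ↦ ⟨?_, ?_⟩⟩
  · exact infinite_of_injective_forall_mem (g_row_inj i true) fun n ↦
      ⟨g_mem (i, true, n), mem_image_of_mem g rfl⟩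
  · exact infinite_of_injective_forall_mem (g_row_inj i false) fun n ↦
      ⟨g_mem (i, false, n), fun h ↦ Bool.false_ne_true (g_inj.mem_set_image.1 h)⟩

end Transversal

theorem exists_forall_splits_of_countable {𝒞 : Set (Set ℕ)} (h𝒞 : 𝒞.Countable)
    (hinf : ∀ C ∈ 𝒞, C.Infinite) : ∃ S, ∀ C ∈ 𝒞, Splits S C := by
  have hcard (C : 𝒞) : #𝒞 ≤ #(C : Set ℕ) :=
    h𝒞.le_aleph0.trans (Cardinal.aleph0_le_mk_iff.2 (hinf C C.2).to_subtype)
  obtain ⟨S, hS⟩ := exists_forall_infinite_inter_and_infinite_sdiff (fun C : 𝒞 ↦ (C : Set ℕ))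
    (fun C ↦ hinf C C.2) hcard
  exact ⟨S, fun C hC ↦ hS ⟨C, hC⟩⟩

namespace Splits

variable {A H S : Set ℕ}

theorem infinite (h : Splits H A) : H.Infinite :=
  h.1.mono inter_subset_right

theorem inter_of_inter (h : Splits S (A ∩ H)) : Splits (H ∩ S) A :=
  ⟨by simpa only [inter_assoc] using h.1,
    h.2.mono fun _ hx ↦ ⟨hx.1.1, fun hxHS ↦ hx.2 hxHS.2⟩⟩

end Splits

/-- If `𝒜 ⊆ [ω]^ω` is ω-hitting, then the family of all infinite subsets of
members of `𝒜` is ω-splitting. -/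
theorem stmt_10 (𝒜 : Set (Set ℕ)) (h𝒜 : ∀ A ∈ 𝒜, A.Infinite) (hh : OmegaHitting 𝒜) :
    OmegaSplitting {B : Set ℕ | B.Infinite ∧ ∃ A ∈ 𝒜, B ⊆ A} := by
  intro 𝒞 h𝒞 hinf
  -- Adding `univ` to `𝒞` makes the splitting set infinite even when `𝒞` is empty.
  have h𝒞' : (insert univ 𝒞).Countable := h𝒞.insert univ
  have hinf' : ∀ C ∈ insert univ 𝒞, C.Infinite := forall_mem_insert.2 ⟨infinite_univ, hinf⟩
  obtain ⟨H, hH, hhit⟩ := hh (insert univ 𝒞) h𝒞' hinf'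
  obtain ⟨S, hS⟩ : ∃ S, ∀ T ∈ (· ∩ H) '' insert univ 𝒞, Splits S T :=
    exists_forall_splits_of_countable (h𝒞'.image _) (forall_mem_image.2 hhit)
  have hsplit : ∀ C ∈ insert univ 𝒞, Splits (H ∩ S) C :=
    fun C hC ↦ (hS (C ∩ H) (mem_image_of_mem _ hC)).inter_of_inter
  have hHS : (H ∩ S).Infinite := (hsplit univ (mem_insert univ 𝒞)).infinite
  exact ⟨H ∩ S, ⟨hHS, H, hH, inter_subset_left⟩,
    fun C hC ↦ hsplit C (mem_insert_of_mem univ hC)⟩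
end

section
/- For A ⊆ ℕ, let A* = {2n : n ∈ A} ∪ {2n+1 : n ∉ A}. If 𝒜 ⊆ [ω]^ω is an ω-splitting family, then 𝒜* = {A* : A ∈ 𝒜} is an ω-hitting family. -/
open Set Topology

/-- `A* = {2n : n ∈ A} ∪ {2n+1 : n ∉ A}`. -/
def starSet (A : Set ℕ) : Set ℕ := (fun n => 2 * n) '' A ∪ (fun n => 2 * n + 1) '' Aᶜ

/-! `A*` codes `A` on the even numbers and `Aᶜ` on the odd ones. An infinite `B` has infinitely
many even or infinitely many odd elements, so `A*` meets `B` infinitely often as soon as `A` splits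
each infinite set among `{n | 2n ∈ B}` and `{n | 2n + 1 ∈ B}`. A countable family of sets `B`
produces only countably many such sets to split. -/

theorem infinite_iff_infinite_preimage_or {α β γ : Type*} {f : α → γ} {g : β → γ}
    (hf : f.Injective) (hg : g.Injective) (hfg : range f ∪ range g = univ) (B : Set γ) :
    B.Infinite ↔ (f ⁻¹' B).Infinite ∨ (g ⁻¹' B).Infinite := by
  have image_union : f '' (f ⁻¹' B) ∪ g '' (g ⁻¹' B) = B := by
    rw [image_preimage_eq_inter_range, image_preimage_eq_inter_range, ← inter_union_distrib_left,
      hfg, inter_univ]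
  rw [← infinite_image_iff hf.injOn, ← infinite_image_iff hg.injOn, ← infinite_union, image_union]

theorem infinite_iff_infinite_preimage_two_mul_or (B : Set ℕ) :
    B.Infinite ↔ ((fun n => 2 * n) ⁻¹' B).Infinite ∨ ((fun n => 2 * n + 1) ⁻¹' B).Infinite :=
  infinite_iff_infinite_preimage_or (mul_right_injective₀ two_ne_zero)
    ((add_left_injective 1).comp (mul_right_injective₀ two_ne_zero))
    (by simpa [Function.comp_def] using Nat.isCompl_even_odd.sup_eq_top) B

theorem preimage_two_mul_starSet (A : Set ℕ) : (fun n => 2 * n) ⁻¹' starSet A = A := by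
  ext n
  simp only [starSet, mem_preimage, mem_union, mem_image, mem_compl_iff]
  grind

theorem preimage_two_mul_add_one_starSet (A : Set ℕ) :
    (fun n => 2 * n + 1) ⁻¹' starSet A = Aᶜ := by
  ext n
  simp only [starSet, mem_preimage, mem_union, mem_image, mem_compl_iff]
  grind

theorem infinite_inter_starSet_iff (A B : Set ℕ) :
    (B ∩ starSet A).Infinite ↔
      ((fun n => 2 * n) ⁻¹' B ∩ A).Infinite ∨ ((fun n => 2 * n + 1) ⁻¹' B \ A).Infinite := by
  rw [infinite_iff_infinite_preimage_two_mul_or, preimage_inter, preimage_inter,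
    preimage_two_mul_starSet, preimage_two_mul_add_one_starSet, sdiff_eq]

/-- If `𝒜 ⊆ [ω]^ω` is ω-splitting, then `𝒜* = {A* : A ∈ 𝒜}` is ω-hitting. -/
theorem stmt_11 (𝒜 : Set (Set ℕ)) (h𝒜 : ∀ A ∈ 𝒜, A.Infinite) (hs : OmegaSplitting 𝒜) :
    OmegaHitting (starSet '' 𝒜) := by
  intro ℬ hℬ hinf
  let halves := preimage (fun n => 2 * n) '' ℬ ∪ preimage (fun n => 2 * n + 1) '' ℬ
  have halves_countable : halves.Countable := (hℬ.image _).union (hℬ.image _)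
  obtain ⟨H, hH, hsplit⟩ := hs {X ∈ halves | X.Infinite}
    (halves_countable.mono (sep_subset _ _)) fun _ hX => hX.2
  refine ⟨starSet H, mem_image_of_mem _ hH, fun B hB => ?_⟩
  rw [infinite_inter_starSet_iff]
  exact ((infinite_iff_infinite_preimage_two_mul_or B).mp (hinf B hB)).imp
    (fun hEven => (hsplit _ ⟨.inl (mem_image_of_mem _ hB), hEven⟩).1)
    (fun hOdd => (hsplit _ ⟨.inr (mem_image_of_mem _ hB), hOdd⟩).2)
end
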